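/- arXiv:2110.01569 — 3 statements merged into one kernel-verified Lean document; each statement's English description precedes it below -/
import Mathlib

section
/- Let H be a separable infinite-dimensional complex Hilbert space and let L be an infinite-dimensional (as a complex vector space) Lie subalgebra of B(H) consisting of compact operators. If there exists T ∈ L such that the principal two-sided ideal (T) generated by T is not soft-edged, i.e. (T) ≠ (T)·K(H), then L is not simple: there exists a Lie ideal J of L with J ≠ {0} and J ≠ L. -/
/-- The two-sided ideal of compact operators on `H`. -/
noncomputable def compactIdeal (H : Type*) [NormedAddCommGroup H]
    [InnerProductSpace ℂ H] : TwoSidedIdeal (H →L[ℂ] H) :=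
  TwoSidedIdeal.mk' {T : H →L[ℂ] H | IsCompactOperator (T : H → H)}
    isCompactOperator_zero
    (fun hx hy => hx.add hy)
    (fun hx => hx.neg)
    (fun {x y} hy => by simpa [Function.comp] using hy.clm_comp x)
    (fun {x y} hx => by simpa [Function.comp] using hx.comp_clm y)

/-- The product `I·J` of two two-sided ideals: the two-sided ideal whose elements are the
finite sums of products `XY` with `X ∈ I` and `Y ∈ J`. -/
noncomputable def idealMul {R : Type*} [Ring R] (I J : TwoSidedIdeal R) : TwoSidedIdeal R :=
  TwoSidedIdeal.span {x : R | ∃ a ∈ I, ∃ b ∈ J, x = a * b}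

section Aux
open Filter Topology

lemma inv_bound {R : Type*} [NormedRing R] [CompleteSpace R]
    (h1 : ‖(1 : R)‖ ≤ 1) (Q : R) (r : ℝ) (hr : 0 < r) (hQ : ‖Q‖ ≤ 1 - r) :
    ∃ c : R, c * (1 - Q) = 1 ∧ (1 - Q) * c = 1 ∧ ‖c‖ ≤ r⁻¹ := by
  obtain ⟨u, hu⟩ := isUnit_one_sub_of_norm_lt_one (x := Q) (by linarith)
  refine ⟨((u⁻¹ : Rˣ) : R), by rw [← hu]; simp, by rw [← hu]; simp, ?_⟩
  set c : R := ((u⁻¹ : Rˣ) : R)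
  have h : (1 - Q) * c = 1 := by rw [← hu]; simp [c]
  have h2 : c = 1 + Q * c := by rw [← h]; noncomm_ring
  have h3 : ‖c‖ ≤ 1 + (1 - r) * ‖c‖ := by
    calc ‖c‖ = ‖1 + Q * c‖ := by rw [← h2]
      _ ≤ ‖(1 : R)‖ + ‖Q * c‖ := norm_add_le _ _
      _ ≤ 1 + ‖Q‖ * ‖c‖ := add_le_add h1 (norm_mul_le _ _)
      _ ≤ _ := by gcongr
  rw [← one_div, le_div_iff₀ hr]
  linarith

lemma cohen {R : Type*} [NormedRing R] [NormedAlgebra ℂ R] [CompleteSpace R]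
    (h1 : ‖(1 : R)‖ ≤ 1) (B : R) (G : ℕ → R) (hG : ∀ k, ‖G k‖ ≤ 1)
    (hc : ∀ i j, Commute (G i) (G j)) (hB : ∀ k, ‖B * G k‖ ≤ (1 / 8) ^ k) :
    ∃ (X : R) (A : ℕ → R), Tendsto A atTop (𝓝 X) ∧
      ∀ N, A N * (1 - ∑ k ∈ Finset.range N, ((1 / 2 : ℂ) ^ (k + 1)) • G k) = B := by
  set Q : ℕ → R := fun N => ∑ k ∈ Finset.range N, ((1 / 2 : ℂ) ^ (k + 1)) • G k with hQd
  have hQ : ∀ N, ‖Q N‖ ≤ 1 - (1 / 2 : ℝ) ^ N := by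
    intro N
    induction N with
    | zero => simp [hQd]
    | succ N ih =>
      have : Q (N + 1) = Q N + ((1 / 2 : ℂ) ^ (N + 1)) • G N := by
        simp only [hQd, Finset.sum_range_succ]
      rw [this]
      have h2 : ‖((1 / 2 : ℂ) ^ (N + 1)) • G N‖ ≤ (1 / 2 : ℝ) ^ (N + 1) := by
        rw [norm_smul]
        have : ‖(1 / 2 : ℂ) ^ (N + 1)‖ = (1 / 2 : ℝ) ^ (N + 1) := by simp
        rw [this]
        exact mul_le_of_le_one_right (by positivity) (hG N)
      have := norm_add_le (Q N) (((1 / 2 : ℂ) ^ (N + 1)) • G N)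
      have h3 : (1 / 2 : ℝ) ^ N = 2 * (1 / 2 : ℝ) ^ (N + 1) := by rw [pow_succ]; ring
      linarith
  choose c hc1 hc2 hc3 using fun N => inv_bound h1 (Q N) ((1 / 2 : ℝ) ^ N) (by positivity) (hQ N)
  have hQG : ∀ N k, Commute (Q N) (G k) := fun N k =>
    Commute.sum_left _ _ _ fun i _ => (hc i k).smul_left _
  have hcG : ∀ N k, c N * G k = G k * c N := by
    intro N k
    have h : (1 - Q N) * G k = G k * (1 - Q N) := by
      have := (hQG N k).eq
      rw [sub_mul, mul_sub, this]; simp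
    calc c N * G k = c N * (G k * ((1 - Q N) * c N)) := by rw [hc2]; simp
      _ = c N * ((1 - Q N) * G k) * c N := by rw [h]; noncomm_ring
      _ = (c N * (1 - Q N)) * G k * c N := by noncomm_ring
      _ = _ := by rw [hc1]; simp
  have hdiff : ∀ N, dist (B * c N) (B * c (N + 1)) ≤ 1 * (1 / 4 : ℝ) ^ N := by
    intro N
    have hs : Q (N + 1) - Q N = ((1 / 2 : ℂ) ^ (N + 1)) • G N := by
      simp only [hQd, Finset.sum_range_succ]; abel
    have : B * c N - B * c (N + 1) = - (((1 / 2 : ℂ) ^ (N + 1)) • (B * G N * c N * c (N + 1))) := by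
      calc B * c N - B * c (N + 1)
          = B * c N * ((1 - Q (N + 1)) * c (N + 1)) - B * (c N * (1 - Q N)) * c (N + 1) := by
            rw [hc1, hc2]; simp
        _ = - (B * (c N * (Q (N + 1) - Q N)) * c (N + 1)) := by noncomm_ring
        _ = _ := by
          rw [hs, mul_smul_comm, hcG, mul_smul_comm, smul_mul_assoc]; simp only [mul_assoc]
    rw [dist_eq_norm, this, norm_neg, norm_smul]
    have h2 : ‖(1 / 2 : ℂ) ^ (N + 1)‖ = (1 / 2 : ℝ) ^ (N + 1) := by simp
    rw [h2]
    calc (1 / 2 : ℝ) ^ (N + 1) * ‖B * G N * c N * c (N + 1)‖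
        ≤ (1 / 2 : ℝ) ^ (N + 1) * (((1 / 8) ^ N * ((1 / 2 : ℝ) ^ N)⁻¹) * ((1 / 2 : ℝ) ^ (N + 1))⁻¹) := by
          gcongr
          refine (norm_mul_le _ _).trans ?_
          gcongr
          · refine (norm_mul_le _ _).trans ?_
            gcongr
            · exact hB N
            · exact hc3 N
          · exact hc3 (N + 1)
      _ = (1 / 8) ^ N * ((1 / 2 : ℝ) ^ N)⁻¹ := by field_simp
      _ = 1 * (1 / 4 : ℝ) ^ N := by
          rw [← inv_pow, ← mul_pow]; norm_num
      _ ≤ _ := le_rfl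
  obtain ⟨X, hX⟩ := cauchySeq_tendsto_of_complete
    (cauchySeq_of_le_geometric (1 / 4 : ℝ) 1 (by norm_num) hdiff)
  exact ⟨X, fun N => B * c N, hX, fun N => by rw [mul_assoc, hc1, mul_one]⟩

variable {H : Type*} [NormedAddCommGroup H] [InnerProductSpace ℂ H] [CompleteSpace H]


/-- resolvent estimates -/
lemma resolvent_bds (T : H →L[ℂ] H) (n : ℕ) :
    ∃ G : H →L[ℂ] H, G * (1 + (n : ℂ) • (T * star T)) = 1 ∧
      (1 + (n : ℂ) • (T * star T)) * G = 1 ∧ ‖G‖ ≤ 1 ∧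
      ∀ x, n * ‖G (T x)‖ ^ 2 ≤ ‖x‖ ^ 2 := by
  have hu : IsUnit (1 + (n : ℂ) • (T * star T)) := by
    have hs : IsStrictlyPositive (1 : H →L[ℂ] H) := by
      exact isStrictlyPositive_one
    refine (IsStrictlyPositive.add_nonneg hs ?_).isUnit
    have : 0 ≤ n • (T * star T) := nsmul_nonneg (mul_star_self_nonneg T) n
    simpa [Nat.cast_smul_eq_nsmul] using this
  obtain ⟨u, hu⟩ := hu
  have key : ∀ y : H, ‖(↑u⁻¹ : H →L[ℂ] H) y‖ ^ 2 + n * ‖star T ((↑u⁻¹ : H →L[ℂ] H) y)‖ ^ 2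
      = RCLike.re (inner ℂ ((↑u⁻¹ : H →L[ℂ] H) y) y) := by
    intro y
    set z := (↑u⁻¹ : H →L[ℂ] H) y with hz
    have h : z + (n : ℂ) • T (star T z) = y := by
      have : (u * ↑u⁻¹ : H →L[ℂ] H) y = y := by simp
      rw [hu] at this
      simpa using this
    conv_rhs => rw [← h]
    rw [inner_add_right, inner_smul_right, ContinuousLinearMap.star_eq_adjoint,
      ← ContinuousLinearMap.adjoint_inner_left T, inner_self_eq_norm_sq_to_K,
      inner_self_eq_norm_sq_to_K]
    have hc : ((‖z‖ : ℂ) ^ 2 + (n : ℂ) * (‖ContinuousLinearMap.adjoint T z‖ : ℂ) ^ 2)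
        = ((‖z‖ ^ 2 + n * ‖ContinuousLinearMap.adjoint T z‖ ^ 2 : ℝ) : ℂ) := by
      push_cast; rfl
    exact (Complex.ofReal_re _).symm.trans (congrArg Complex.re hc.symm)
  have hre : ∀ a b : H, RCLike.re (inner ℂ a b) ≤ ‖a‖ * ‖b‖ := fun a b => re_inner_le_norm a b
  refine ⟨((u⁻¹ : (H →L[ℂ] H)ˣ) : H →L[ℂ] H), by rw [← hu]; simp, by rw [← hu]; simp, ?_, ?_⟩
  · refine ContinuousLinearMap.opNorm_le_bound _ zero_le_one fun y => ?_
    have h1 := key y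
    have h2 := hre ((↑u⁻¹ : H →L[ℂ] H) y) y
    rw [one_mul]
    by_contra! hlt
    have : 0 < ‖(↑u⁻¹ : H →L[ℂ] H) y‖ := (norm_nonneg _).trans_lt hlt
    have h3 : 0 ≤ n * ‖star T ((↑u⁻¹ : H →L[ℂ] H) y)‖ ^ 2 := by positivity
    nlinarith
  · intro x
    have h1 := key (T x)
    set z := (↑u⁻¹ : H →L[ℂ] H) (T x)
    rw [← ContinuousLinearMap.adjoint_inner_left, ← ContinuousLinearMap.star_eq_adjoint] at h1
    have h2 := hre (star T z) x
    have hn : (0 : ℝ) ≤ n := n.cast_nonneg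
    have h4 : ‖z‖ ^ 2 ≤ ‖star T z‖ * ‖x‖ - n * ‖star T z‖ ^ 2 := by linarith
    have h5 := mul_le_mul_of_nonneg_left h4 hn
    nlinarith [sq_nonneg (n * ‖star T z‖ - ‖x‖), norm_nonneg x, norm_nonneg (star T z), mul_nonneg hn (norm_nonneg (star T z)), sq_nonneg (n * ‖star T z‖)]

lemma compact_unif (C : H →L[ℂ] H) (hC : IsCompactOperator C) (G : ℕ → H →L[ℂ] H)
    (hG : ∀ n, ‖G n‖ ≤ 1) (hs : ∀ x, Tendsto (fun n => G n (C x)) atTop (𝓝 0))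
    (ε : ℝ) (hε : 0 < ε) : ∃ n, ‖G n * C‖ ≤ ε := by
  have htb : TotallyBounded (C '' Metric.closedBall 0 1) :=
    (hC.isCompact_closure_image_closedBall 1).totallyBounded.subset subset_closure
  obtain ⟨t, hts, htf, hcov⟩ := Metric.finite_approx_of_totallyBounded htb (ε / 2) (by positivity)
  have hev : ∀ᶠ n in atTop, ∀ y ∈ t, ‖G n y‖ < ε / 2 := by
    rw [eventually_all_finite htf]
    intro y hy
    obtain ⟨x, -, rfl⟩ := hts hy
    have := (hs x).norm
    rw [norm_zero] at this
    exact this.eventually_lt_const (by positivity)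
  obtain ⟨n, hn⟩ := hev.exists
  refine ⟨n, ContinuousLinearMap.opNorm_le_of_unit_norm (𝕜 := ℂ) hε.le fun x hx => ?_⟩
  have hx' : C x ∈ C '' Metric.closedBall 0 1 := ⟨x, by simp [hx], rfl⟩
  obtain ⟨y, hy, hxy⟩ := Set.mem_iUnion₂.1 (hcov hx')
  rw [Metric.mem_ball, dist_eq_norm] at hxy
  calc ‖G n (C x)‖ = ‖G n (C x - y) + G n y‖ := by rw [map_sub]; simp
    _ ≤ ‖G n (C x - y)‖ + ‖G n y‖ := norm_add_le _ _
    _ ≤ 1 * ‖C x - y‖ + ‖G n y‖ := by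
      gcongr
      exact (G n).le_of_opNorm_le (hG n) _
    _ ≤ ε := by linarith [hn y hy]

lemma compact_factor (A T : H →L[ℂ] H) (hA : IsCompactOperator A) (hT : IsCompactOperator T) :
    ∃ X Y : H →L[ℂ] H, IsCompactOperator Y ∧ A * T = X * T * Y := by
  choose G hG1 hG2 hG3 hG4 using fun n => resolvent_bds T n
  choose G' hG'1 hG'2 hG'3 hG'4 using fun n => resolvent_bds (star T) n
  simp only [star_star] at hG'1 hG'2
  have inv_eq : ∀ (a b c : H →L[ℂ] H), a * b = 1 → b * c = 1 → a = c := fun a b c h1 h2 =>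
    left_inv_eq_right_inv h1 h2
  have hsa : ∀ n, star (G n) = G n := by
    intro n
    refine inv_eq _ _ _ ?_ (hG2 n)
    have := congrArg star (hG2 n)
    simpa using this
  have hcommG : ∀ i j, Commute (G i) (G j) := by
    intro i j
    have hS : Commute (1 + (i : ℂ) • (T * star T)) (1 + (j : ℂ) • (T * star T)) :=
      (Commute.one_left _).add_left
        ((Commute.one_right _).add_right (((Commute.refl _).smul_left _).smul_right _))
    let ui : (H →L[ℂ] H)ˣ := ⟨_, G i, hG2 i, hG1 i⟩
    let uj : (H →L[ℂ] H)ˣ := ⟨_, G j, hG2 j, hG1 j⟩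
    have h : Commute (ui : H →L[ℂ] H) uj := hS
    exact (h.units_inv_left).units_inv_right
  have hint : ∀ n, G n * T = T * G' n := by
    intro n
    have h : (1 + (n : ℂ) • (T * star T)) * T = T * (1 + (n : ℂ) • (star T * T)) := by
      simp [add_mul, mul_add, mul_assoc]
    calc G n * T = G n * (T * ((1 + (n : ℂ) • (star T * T)) * G' n)) := by rw [hG'2]; simp
      _ = G n * ((1 + (n : ℂ) • (T * star T)) * T) * G' n := by rw [h]; simp only [mul_assoc]
      _ = (G n * (1 + (n : ℂ) • (T * star T))) * T * G' n := by simp only [mul_assoc]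
      _ = _ := by rw [hG1]; simp
  have hcpt : ∀ n, IsCompactOperator ((1 : H →L[ℂ] H) - G' n) := by
    intro n
    have h : (1 : H →L[ℂ] H) - G' n = ((n : ℂ) • star T) * T * G' n := by
      conv_lhs => rw [← hG'2 n]
      simp [add_mul, mul_assoc]
    rw [h]
    exact (hT.clm_comp ((n : ℂ) • star T)).comp_clm (G' n)
  let V : Submodule ℂ H := (LinearMap.range (T : H →ₗ[ℂ] H)).topologicalClosure
  have hVc : IsClosed (V : Set H) := Submodule.isClosed_topologicalClosure _
  have : CompleteSpace V := hVc.completeSpace_coe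
  let p : H →L[ℂ] H := V.starProjection
  have hp : star p = p := (isSelfAdjoint_starProjection V)
  have hpT : p * T = T := by
    ext x
    exact Submodule.starProjection_eq_self_iff.2 (Submodule.le_topologicalClosure _ ⟨x, rfl⟩)
  have hpV : ∀ x, p x ∈ V := fun x => Submodule.starProjection_apply_mem V x
  have hrange : ∀ x, Tendsto (fun n => G n (T x)) atTop (𝓝 0) := by
    intro x
    rw [tendsto_zero_iff_norm_tendsto_zero]
    have h0 : Tendsto (fun n : ℕ => Real.sqrt (‖x‖ ^ 2 / n)) atTop (𝓝 0) := by
      have := (tendsto_const_div_atTop_nhds_zero_nat (‖x‖ ^ 2)).sqrt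
      simpa using this
    refine squeeze_zero' (Eventually.of_forall fun n => norm_nonneg _) ?_ h0
    filter_upwards [eventually_gt_atTop 0] with n hn
    have hn' : (0 : ℝ) < n := by exact_mod_cast hn
    refine Real.le_sqrt_of_sq_le ?_
    rw [le_div_iff₀ hn']
    linarith [hG4 n x]
  have hstrong : ∀ y ∈ V, Tendsto (fun n => G n y) atTop (𝓝 0) := by
    intro y hy
    rw [Metric.tendsto_atTop]
    intro ε hε
    obtain ⟨w, ⟨x, rfl⟩, hx⟩ := Metric.mem_closure_iff.1 (show y ∈ closure _ from hy) (ε / 2) (by positivity)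
    obtain ⟨N, hN⟩ := Metric.tendsto_atTop.1 (hrange x) (ε / 2) (by positivity)
    refine ⟨N, fun n hn => ?_⟩
    have h1 := hN n hn
    rw [dist_zero_right] at h1 ⊢
    rw [dist_eq_norm] at hx
    calc ‖G n y‖ = ‖G n (y - T x) + G n (T x)‖ := by rw [map_sub]; simp
      _ ≤ ‖G n (y - T x)‖ + ‖G n (T x)‖ := norm_add_le _ _
      _ ≤ 1 * ‖y - T x‖ + ‖G n (T x)‖ := by
        gcongr
        exact (G n).le_of_opNorm_le (hG3 n) _
      _ < ε := by
        have : ‖y - T x‖ < ε / 2 := hx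
        linarith
  let B : H →L[ℂ] H := A * p
  have hBB : IsCompactOperator (star B * B) :=
    (hA.comp_clm p).clm_comp (star B)
  have hsmall : ∀ k : ℕ, ∃ n, ‖B * G n‖ ≤ (1 / 8) ^ k := by
    intro k
    obtain ⟨n, hn⟩ := compact_unif (star B * B) hBB G hG3
      (fun x => hstrong _ (by
        have : star B * B = p * (star A * B) := by simp [B, hp, mul_assoc]
        rw [this]; exact hpV _)) (((1 / 8) ^ k) ^ 2) (by positivity)
    refine ⟨n, abs_le_of_sq_le_sq' ?_ (by positivity) |>.2⟩
    calc ‖B * G n‖ ^ 2 = ‖star (B * G n) * (B * G n)‖ := by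
          rw [CStarRing.norm_star_mul_self, sq]
      _ = ‖G n * (star B * B) * G n‖ := by rw [star_mul, hsa]; simp only [mul_assoc]
      _ ≤ ‖G n * (star B * B)‖ * ‖G n‖ := norm_mul_le _ _
      _ ≤ ((1 / 8) ^ k) ^ 2 * 1 := by
        gcongr
        exact hG3 n
      _ = _ := mul_one _
  choose m hm using hsmall
  have h1 : ‖(1 : H →L[ℂ] H)‖ ≤ 1 := ContinuousLinearMap.norm_id_le
  obtain ⟨X, a, haX, ha⟩ := cohen h1 B (fun k => G (m k)) (fun k => hG3 _)
    (fun i j => hcommG _ _) hm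
  let q : ℕ → H →L[ℂ] H := fun N => 1 - ∑ k ∈ Finset.range N, ((1 / 2 : ℂ) ^ (k + 1)) • G' (m k)
  let r : ℕ → H →L[ℂ] H := fun N => ∑ k ∈ Finset.range N, ((1 / 2 : ℂ) ^ (k + 1)) • (1 - G' (m k))
  have hqr : ∀ N, q N = r N + ((1 / 2 : ℂ) ^ N) • 1 := by
    intro N
    induction N with
    | zero => simp [q, r]
    | succ N ih =>
      have hq : q (N + 1) = q N - ((1 / 2 : ℂ) ^ (N + 1)) • G' (m N) := by
        simp only [q, Finset.sum_range_succ]; abel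
      have hr : r (N + 1) = r N + ((1 / 2 : ℂ) ^ (N + 1)) • (1 - G' (m N)) := by
        simp only [r, Finset.sum_range_succ]
      have h2 : ((1 / 2 : ℂ) ^ N) = (1 / 2 : ℂ) ^ (N + 1) + (1 / 2 : ℂ) ^ (N + 1) := by
        rw [pow_succ]; ring
      rw [hq, hr, ih, h2, add_smul, smul_sub]; abel
  have hrc : ∀ N, IsCompactOperator (r N) := by
    intro N
    have : r N ∈ compactOperator (RingHom.id ℂ) H H := 
      Submodule.sum_mem _ fun k _ => Submodule.smul_mem _ _ (hcpt (m k))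
    exact this
  have hrC : CauchySeq r := by
    refine cauchySeq_of_le_geometric (1 / 2 : ℝ) 1 (by norm_num) fun N => ?_
    have hr : r (N + 1) = r N + ((1 / 2 : ℂ) ^ (N + 1)) • (1 - G' (m N)) := by
      simp only [r, Finset.sum_range_succ]
    rw [hr, dist_self_add_right, norm_smul]
    have h2 : ‖(1 / 2 : ℂ) ^ (N + 1)‖ = (1 / 2 : ℝ) ^ (N + 1) := by simp
    have h3 : ‖1 - G' (m N)‖ ≤ 2 := by
      have := norm_sub_le 1 (G' (m N))
      linarith [hG'3 (m N)]
    rw [h2, pow_succ]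
    have : (0 : ℝ) < (1 / 2) ^ N := by positivity
    nlinarith
  obtain ⟨Y, hY⟩ := cauchySeq_tendsto_of_complete hrC
  have hqY : Tendsto q atTop (𝓝 Y) := by
    have h2 : Tendsto (fun N : ℕ => ((1 / 2 : ℂ) ^ N) • (1 : H →L[ℂ] H)) atTop (𝓝 0) := by
      have := (tendsto_pow_atTop_nhds_zero_of_norm_lt_one (x := (1 / 2 : ℂ)) (by norm_num)).smul_const
        (1 : H →L[ℂ] H)
      simpa using this
    have := hY.add h2
    rw [add_zero] at this
    exact this.congr fun N => (hqr N).symm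
  refine ⟨X, Y, isCompactOperator_of_tendsto hY (Eventually.of_forall hrc), ?_⟩
  have hconst : ∀ N, a N * T * q N = A * T := by
    intro N
    have : T * q N = (1 - ∑ k ∈ Finset.range N, ((1 / 2 : ℂ) ^ (k + 1)) • G (m k)) * T := by
      simp only [q, mul_sub, sub_mul, Finset.mul_sum, Finset.sum_mul, mul_smul_comm,
        smul_mul_assoc, hint, mul_one, one_mul]
    rw [mul_assoc, this, ← mul_assoc, ha N]
    simp only [B]
    rw [mul_assoc, hpT]
  have hlim : Tendsto (fun N => a N * T * q N) atTop (𝓝 (X * T * Y)) :=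
    (haX.mul tendsto_const_nhds).mul hqY
  simp only [hconst] at hlim
  exact tendsto_nhds_unique tendsto_const_nhds hlim

end Aux

/-- **Theorem (main result).** Let `H` be a separable infinite-dimensional complex Hilbert
space and `L` an infinite-dimensional Lie subalgebra of `B(H)` consisting of compact
operators.  If some `T ∈ L` generates a principal two-sided ideal `(T)` which is not
soft-edged (i.e. `(T) ≠ (T)·K(H)`), then `L` is not simple: there is a Lie ideal `J` of `L`
with `J ≠ {0}` and `J ≠ L`. -/
theorem stmt0 {H : Type*} [NormedAddCommGroup H] [InnerProductSpace ℂ H]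
    [CompleteSpace H] [TopologicalSpace.SeparableSpace H]
    (hHinf : ¬ FiniteDimensional ℂ H)
    (L : Submodule ℂ (H →L[ℂ] H))
    (hLie : ∀ A ∈ L, ∀ B ∈ L, A * B - B * A ∈ L)
    (hLcompact : ∀ T ∈ L, IsCompactOperator (T : H → H))
    (hLinf : ¬ FiniteDimensional ℂ ↥L)
    (T : H →L[ℂ] H) (hTL : T ∈ L)
    (hTnotsoft :
      TwoSidedIdeal.span {T} ≠ idealMul (TwoSidedIdeal.span {T}) (compactIdeal H)) :
    ∃ J : Submodule ℂ (H →L[ℂ] H),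
      J ≤ L ∧ (∀ A ∈ L, ∀ B ∈ J, A * B - B * A ∈ J) ∧ J ≠ ⊥ ∧ J ≠ L := by
  set I := idealMul (TwoSidedIdeal.span {T}) (compactIdeal H) with hI
  have hTT : T ∈ TwoSidedIdeal.span {T} := TwoSidedIdeal.subset_span rfl
  have hmul : ∀ X Y : H →L[ℂ] H, X ∈ TwoSidedIdeal.span {T} → IsCompactOperator Y → X * Y ∈ I := by
    intro X Y hX hY
    refine TwoSidedIdeal.subset_span ⟨X, hX, Y, ?_, rfl⟩
    rw [compactIdeal, TwoSidedIdeal.mem_mk']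
    exact hY
  have hTI : T ∉ I := by
    intro h
    apply hTnotsoft
    apply le_antisymm
    · rw [TwoSidedIdeal.span_le]
      simpa using h
    · rw [hI, idealMul, TwoSidedIdeal.span_le]
      rintro x ⟨a, ha, b, -, rfl⟩
      exact TwoSidedIdeal.mul_mem_right _ _ _ ha
  have hcomm : ∀ A ∈ L, A * T - T * A ∈ I := by
    intro A hA
    refine TwoSidedIdeal.sub_mem _ ?_ (hmul T A hTT (hLcompact A hA))
    obtain ⟨X, Y, hY, h⟩ := compact_factor A T (hLcompact A hA) (hLcompact T hTL)
    rw [h]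
    exact hmul _ _ (TwoSidedIdeal.mul_mem_left _ _ _ hTT) hY
  let J : Submodule ℂ (H →L[ℂ] H) :=
    { carrier := {x | x ∈ L ∧ x ∈ I}
      add_mem' := fun ha hb => ⟨L.add_mem ha.1 hb.1, I.add_mem ha.2 hb.2⟩
      zero_mem' := ⟨L.zero_mem, I.zero_mem⟩
      smul_mem' := fun c x hx => ⟨L.smul_mem c hx.1, by
        have : c • x = (c • 1) * x := by simp
        rw [this]
        exact I.mul_mem_left _ _ hx.2⟩ }
  have hJL : J ≤ L := fun x hx => hx.1
  by_cases hJ : J = ⊥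
  · have hz : ∀ A ∈ L, A * T - T * A = 0 := by
      intro A hA
      have : A * T - T * A ∈ J := ⟨hLie A hA T hTL, hcomm A hA⟩
      rw [hJ] at this
      simpa using this
    refine ⟨Submodule.span ℂ {T}, by simpa using hTL, ?_, ?_, ?_⟩
    · intro A hA B hB
      obtain ⟨c, rfl⟩ := Submodule.mem_span_singleton.1 hB
      have : A * (c • T) - (c • T) * A = c • (A * T - T * A) := by
        rw [mul_smul_comm, smul_mul_assoc, smul_sub]
      rw [this, hz A hA, smul_zero]
      exact Submodule.zero_mem _
    · intro h
      rw [Submodule.span_singleton_eq_bot] at h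
      exact hTI (h ▸ I.zero_mem)
    · intro h
      apply hLinf
      rw [← h]
      infer_instance
  · refine ⟨J, hJL, fun A hA B hB => ⟨hLie A hA B hB.1, ?_⟩, hJ, ?_⟩
    · exact I.sub_mem (I.mul_mem_left _ _ hB.2) (I.mul_mem_right _ _ hB.2)
    · intro h
      have : T ∈ J := h ▸ hTL
      exact hTI this.2
end

section
/- Let H be a separable infinite-dimensional complex Hilbert space and let L be a nonabelian (i.e. [L,L] ≠ {0}) Lie subalgebra of B(H) consisting of compact operators. If the two-sided ideal (L) generated by L is not soft-edged, i.e. (L) ≠ (L)·K(H), then L is not simple: there exists a Lie ideal J of L with J ≠ {0} and J ≠ L. -/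
/-- **Corollary.** Let `H` be a separable infinite-dimensional complex Hilbert space and `L`
a nonabelian Lie subalgebra of `B(H)` consisting of compact operators.  If the two-sided
ideal `(L)` generated by `L` is not soft-edged, i.e. `(L) ≠ (L)·K(H)`, then `L` is not
simple: there is a Lie ideal `J` of `L` with `J ≠ {0}` and `J ≠ L`. -/
theorem stmt3 {H : Type*} [NormedAddCommGroup H] [InnerProductSpace ℂ H]
    [CompleteSpace H] [TopologicalSpace.SeparableSpace H]
    (hHinf : ¬ FiniteDimensional ℂ H)
    (L : Submodule ℂ (H →L[ℂ] H))
    (hLie : ∀ A ∈ L, ∀ B ∈ L, A * B - B * A ∈ L)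
    (hLcompact : ∀ T ∈ L, IsCompactOperator (T : H → H))
    (hnonabelian : ∃ A ∈ L, ∃ B ∈ L, A * B - B * A ≠ 0)
    (hnotsoft :
      TwoSidedIdeal.span (L : Set (H →L[ℂ] H)) ≠
        idealMul (TwoSidedIdeal.span (L : Set (H →L[ℂ] H))) (compactIdeal H)) :
    ∃ J : Submodule ℂ (H →L[ℂ] H),
      J ≤ L ∧ (∀ A ∈ L, ∀ B ∈ J, A * B - B * A ∈ J) ∧ J ≠ ⊥ ∧ J ≠ L := by
  have hK : ∀ T ∈ L, T ∈ compactIdeal H := by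
    intro T hT
    unfold compactIdeal
    rw [TwoSidedIdeal.mem_mk']
    exact hLcompact T hT
  have hsub : ∀ T ∈ L, T ∈ TwoSidedIdeal.span (L : Set (H →L[ℂ] H)) := fun T hT =>
    TwoSidedIdeal.subset_span hT
  let S : Set (H →L[ℂ] H) := {x | ∃ A ∈ L, ∃ B ∈ L, x = A * B - B * A}
  have hJL : Submodule.span ℂ S ≤ L := by
    rw [Submodule.span_le]
    rintro x ⟨A, hA, B, hB, rfl⟩
    exact hLie A hA B hB
  refine ⟨Submodule.span ℂ S, hJL, ?_, ?_, ?_⟩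
  · intro A hA B hB
    exact Submodule.subset_span ⟨A, hA, B, hJL hB, rfl⟩
  · intro h
    obtain ⟨A, hA, B, hB, hne⟩ := hnonabelian
    have hm : A * B - B * A ∈ Submodule.span ℂ S :=
      Submodule.subset_span ⟨A, hA, B, hB, rfl⟩
    rw [h, Submodule.mem_bot] at hm
    exact hne hm
  · intro h
    apply hnotsoft
    have hprod : ∀ A ∈ L, ∀ B ∈ L,
        A * B ∈ idealMul (TwoSidedIdeal.span (L : Set (H →L[ℂ] H))) (compactIdeal H) :=
      fun A hA B hB => TwoSidedIdeal.subset_span ⟨A, hsub A hA, B, hK B hB, rfl⟩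
    apply le_antisymm
    · rw [TwoSidedIdeal.span_le]
      intro T hT
      have hT' : T ∈ Submodule.span ℂ S := by rw [h]; exact hT
      induction hT' using Submodule.span_induction with
      | mem x hx =>
        obtain ⟨A, hA, B, hB, rfl⟩ := hx
        exact TwoSidedIdeal.sub_mem _ (hprod A hA B hB) (hprod B hB A hA)
      | zero => exact TwoSidedIdeal.zero_mem _
      | add x y hx hy ihx ihy =>
        exact TwoSidedIdeal.add_mem _ (ihx (hJL hx)) (ihy (hJL hy))
      | smul c x hx ih =>
        have := TwoSidedIdeal.mul_mem_left _ (c • (1 : H →L[ℂ] H)) x (ih (hJL hx))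
        rwa [smul_mul_assoc, one_mul] at this
    · unfold idealMul
      rw [TwoSidedIdeal.span_le]
      rintro x ⟨a, ha, b, hb, rfl⟩
      exact TwoSidedIdeal.mul_mem_right _ _ _ ha
end

section
/- Let H be a separable infinite-dimensional complex Hilbert space, let L be a Lie subalgebra of B(H) consisting of compact operators, and let T, S ∈ L. Then every element of the smallest Lie ideal of L containing the commutator [T, S] = TS − ST belongs to the two-sided ideal product (T)·K(H), where (T) is the two-sided ideal of B(H) generated by T. -/
/-- Douglas factorization. -/
theorem douglas_aux {H : Type*} [NormedAddCommGroup H] [InnerProductSpace ℂ H]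
    [CompleteSpace H] (A B : H →L[ℂ] H) (h : ∀ x, ‖A x‖ ≤ ‖B x‖) :
    ∃ C : H →L[ℂ] H, A = C * B := by
  let M : Submodule ℂ H := (LinearMap.range (B : H →ₗ[ℂ] H)).topologicalClosure
  have hmem : ∀ x, B x ∈ M := fun x =>
    Submodule.le_topologicalClosure _ (LinearMap.mem_range_self (B : H →ₗ[ℂ] H) x)
  have hMc : IsClosed (M : Set H) := Submodule.isClosed_topologicalClosure _
  have : CompleteSpace M := hMc.completeSpace_coe
  let e : H →ₗ[ℂ] M := (B : H →ₗ[ℂ] H).codRestrict M hmem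
  have hd : DenseRange e := by
    intro x
    rw [closure_subtype, ← Set.range_comp]
    have hx : (x : H) ∈ closure (Set.range B) := by
      have := x.2
      rw [← SetLike.mem_coe, Submodule.topologicalClosure_coe] at this
      exact this
    exact hx
  have hn : ∃ C : ℝ, ∀ x, ‖(A : H →ₗ[ℂ] H) x‖ ≤ C * ‖e x‖ :=
    ⟨1, fun x => by rw [one_mul]; exact h x⟩
  refine ⟨((A : H →ₗ[ℂ] H).extendOfNorm e).comp M.orthogonalProjection, ?_⟩
  ext x
  have h1 := LinearMap.extendOfNorm_eq hd hn x
  have h2 : M.orthogonalProjection (B x) = e x :=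
    Submodule.orthogonalProjection_mem_subspace_eq_self (K := M) (e x)
  simp only [ContinuousLinearMap.mul_apply, ContinuousLinearMap.comp_apply]
  rw [h2, h1]
  rfl

/-- Every operator is of the form `A * star Z * B`. -/
theorem exists_eq_mul_star_mul {H : Type*} [NormedAddCommGroup H] [InnerProductSpace ℂ H]
    [CompleteSpace H] (Z : H →L[ℂ] H) :
    ∃ A B : H →L[ℂ] H, Z = A * star Z * B := by
  have hsa : star (CFC.abs Z) = CFC.abs Z := (CFC.abs_nonneg Z).isSelfAdjoint
  have hsq : ∀ P : H →L[ℂ] H, ∀ x, (‖P x‖ : ℝ) ^ 2 = RCLike.re (inner ℂ ((star P * P) x) x) := by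
    intro P x
    rw [ContinuousLinearMap.star_eq_adjoint]
    exact P.apply_norm_sq_eq_inner_adjoint_left x
  have hnorm : ∀ x, ‖CFC.abs Z x‖ = ‖Z x‖ := by
    intro x
    have h1 := hsq (CFC.abs Z) x
    rw [hsa, CFC.abs_mul_abs, ← hsq Z x] at h1
    exact (sq_eq_sq₀ (norm_nonneg _) (norm_nonneg _)).1 h1
  obtain ⟨U, hU⟩ := douglas_aux Z (CFC.abs Z) (fun x => (hnorm x).ge)
  obtain ⟨V, hV⟩ := douglas_aux (CFC.abs Z) Z (fun x => (hnorm x).le)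
  refine ⟨U, star V, ?_⟩
  have h3 : CFC.abs Z = star Z * star V := by
    rw [← hsa, ← star_mul, ← hV]
  rw [mul_assoc, ← h3]
  exact hU

/-- Two-sided ideals of `B(H)` are self-adjoint. -/
theorem ideal_mem_of_adj {H : Type*} [NormedAddCommGroup H] [InnerProductSpace ℂ H]
    [CompleteSpace H] (I : TwoSidedIdeal (H →L[ℂ] H)) {Z : H →L[ℂ] H} (h : star Z ∈ I) :
    Z ∈ I := by
  obtain ⟨A, B, hAB⟩ := exists_eq_mul_star_mul Z
  rw [hAB]
  exact I.mul_mem_right _ _ (I.mul_mem_left _ _ h)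

/-- Let `H` be a separable infinite-dimensional complex Hilbert space, `L` a Lie
subalgebra of `B(H)` consisting of compact operators, and `T, S ∈ L`.  Every element of
the smallest Lie ideal of `L` containing the commutator `[T, S]` (i.e. every element lying
in all Lie ideals of `L` containing `[T, S]`) belongs to the ideal product `(T)·K(H)`. -/
theorem stmt8 {H : Type*} [NormedAddCommGroup H] [InnerProductSpace ℂ H]
    [CompleteSpace H] [TopologicalSpace.SeparableSpace H]
    (hHinf : ¬ FiniteDimensional ℂ H)
    (L : Submodule ℂ (H →L[ℂ] H))
    (hLie : ∀ A ∈ L, ∀ B ∈ L, A * B - B * A ∈ L)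
    (hLcompact : ∀ T ∈ L, IsCompactOperator (T : H → H))
    (T S : H →L[ℂ] H) (hT : T ∈ L) (hS : S ∈ L)
    (X : H →L[ℂ] H)
    (hX : ∀ J : Submodule ℂ (H →L[ℂ] H),
        J ≤ L → (∀ A ∈ L, ∀ B ∈ J, A * B - B * A ∈ J) → T * S - S * T ∈ J → X ∈ J) :
    X ∈ idealMul (TwoSidedIdeal.span {T}) (compactIdeal H) := by
  set I := idealMul (TwoSidedIdeal.span {T}) (compactIdeal H) with hI
  have hprod : ∀ a ∈ TwoSidedIdeal.span {T}, ∀ b ∈ compactIdeal H, a * b ∈ I :=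
    fun a ha b hb => TwoSidedIdeal.subset_span ⟨a, ha, b, hb, rfl⟩
  have hT1 : T ∈ TwoSidedIdeal.span {T} := TwoSidedIdeal.subset_span rfl
  have hS1 : S ∈ compactIdeal H := by
    rw [compactIdeal, TwoSidedIdeal.mem_mk']
    · exact hLcompact S hS
  have hTS : T * S ∈ I := hprod T hT1 S hS1
  have hST : S * T ∈ I := by
    apply ideal_mem_of_adj
    rw [star_mul]
    exact hprod _ (ideal_mem_of_adj _ (by rwa [star_star])) _
      (ideal_mem_of_adj _ (by rwa [star_star]))
  let J : Submodule ℂ (H →L[ℂ] H) :=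
    { carrier := {Y | Y ∈ L ∧ Y ∈ I}
      add_mem' := fun ha hb => ⟨L.add_mem ha.1 hb.1, I.add_mem ha.2 hb.2⟩
      zero_mem' := ⟨L.zero_mem, I.zero_mem⟩
      smul_mem' := fun c Y hY => ⟨L.smul_mem c hY.1, by
        have := I.mul_mem_left (c • (1 : H →L[ℂ] H)) Y hY.2
        rwa [smul_mul_assoc, one_mul] at this⟩ }
  exact (hX J (fun Y hY => hY.1)
    (fun A hA B hB => ⟨hLie A hA B hB.1,
      I.sub_mem (I.mul_mem_left _ _ hB.2) (I.mul_mem_right _ _ hB.2)⟩)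
    ⟨hLie T hT S hS, I.sub_mem hTS hST⟩).2
end
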